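/- arXiv:1911.02305 — 8 statements merged into one kernel-verified Lean document; each statement's English description precedes it below -/
import Mathlib

section
/- Suppose the real polynomial x^3 + 3x^2 + b x + c factors as (x + y1)(x + y2)(x + y3) with y1, y2, y3 > 0 (i.e., it has three negative real roots). Then 0 < b ≤ 3 and 0 < c ≤ 1. -/
/-!
By Vieta, the coefficients `a`, `b`, `c` of `(x + u) (x + v) (x + w)` are the elementary symmetric
functions of `u`, `v`, `w`. The sum of squares of the differences gives `3 b ≤ a ^ 2`; weighting
each square by the remaining variable gives `9 c ≤ a b`, and together `27 c ≤ 3 a b ≤ a ^ 3`.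
-/

theorem coeffs_eq_of_forall_cubic_eq_mul {R : Type*} [CommRing R] [IsDomain R] [Infinite R]
    {a b c u v w : R}
    (h : ∀ x : R, x ^ 3 + a * x ^ 2 + b * x + c = (x + u) * (x + v) * (x + w)) :
    a = u + v + w ∧ b = u * v + v * w + w * u ∧ c = u * v * w := by
  have hpoly : (Cubic.mk 1 a b c).toPoly =
      (Cubic.mk 1 (u + v + w) (u * v + v * w + w * u) (u * v * w)).toPoly :=
    Polynomial.funext fun x ↦ by
      simp only [Cubic.toPoly, Polynomial.eval_add, Polynomial.eval_mul, Polynomial.eval_pow,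
        Polynomial.eval_C, Polynomial.eval_X]
      linear_combination h x
  exact ⟨Cubic.b_of_eq hpoly, Cubic.c_of_eq hpoly, Cubic.d_of_eq hpoly⟩

section LinearOrderedRing

variable {R : Type*} [CommRing R] [LinearOrder R] [IsStrictOrderedRing R]

theorem three_mul_add_add_le_sq_add_add (u v w : R) :
    3 * (u * v + v * w + w * u) ≤ (u + v + w) ^ 2 := by
  have hsq : 0 ≤ (u - v) ^ 2 + (v - w) ^ 2 + (w - u) ^ 2 := by positivity
  linarith

theorem nine_mul_mul_le_add_add_mul_add_add {u v w : R} (hu : 0 ≤ u) (hv : 0 ≤ v) (hw : 0 ≤ w) :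
    9 * (u * v * w) ≤ (u + v + w) * (u * v + v * w + w * u) := by
  have hsq : 0 ≤ u * (v - w) ^ 2 + v * (w - u) ^ 2 + w * (u - v) ^ 2 := by positivity
  linarith

theorem twentySeven_mul_mul_le_pow_three_add_add {u v w : R}
    (hu : 0 ≤ u) (hv : 0 ≤ v) (hw : 0 ≤ w) :
    27 * (u * v * w) ≤ (u + v + w) ^ 3 :=
  calc
    27 * (u * v * w) = 3 * (9 * (u * v * w)) := by ring
    _ ≤ 3 * ((u + v + w) * (u * v + v * w + w * u)) := by
      gcongr 3 * ?_
      exact nine_mul_mul_le_add_add_mul_add_add hu hv hw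
    _ = (u + v + w) * (3 * (u * v + v * w + w * u)) := by ring
    _ ≤ (u + v + w) * (u + v + w) ^ 2 := by
      gcongr (u + v + w) * ?_
      exact three_mul_add_add_le_sq_add_add u v w
    _ = (u + v + w) ^ 3 := by ring

theorem cubic_neg_roots_coeff_bounds_general {a b c u v w : R}
    (hu : 0 < u) (hv : 0 < v) (hw : 0 < w)
    (hfac : ∀ x : R, x ^ 3 + a * x ^ 2 + b * x + c = (x + u) * (x + v) * (x + w)) :
    0 < b ∧ 3 * b ≤ a ^ 2 ∧ 0 < c ∧ 27 * c ≤ a ^ 3 := by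
  obtain ⟨rfl, rfl, rfl⟩ := coeffs_eq_of_forall_cubic_eq_mul hfac
  exact ⟨by positivity, three_mul_add_add_le_sq_add_add u v w, by positivity,
    twentySeven_mul_mul_le_pow_three_add_add hu.le hv.le hw.le⟩

end LinearOrderedRing

/-- If `x^3 + 3x^2 + b x + c = (x + y1)(x + y2)(x + y3)` with `y1, y2, y3 > 0`,
then `0 < b ≤ 3` and `0 < c ≤ 1`. -/
theorem cubic_neg_roots_coeff_bounds (b c y₁ y₂ y₃ : ℝ)
    (h₁ : 0 < y₁) (h₂ : 0 < y₂) (h₃ : 0 < y₃)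
    (hfac : ∀ x : ℝ, x ^ 3 + 3 * x ^ 2 + b * x + c = (x + y₁) * (x + y₂) * (x + y₃)) :
    0 < b ∧ b ≤ 3 ∧ 0 < c ∧ c ≤ 1 := by
  obtain ⟨hb_pos, hb_le, hc_pos, hc_le⟩ := cubic_neg_roots_coeff_bounds_general h₁ h₂ h₃ hfac
  exact ⟨hb_pos, by linarith, hc_pos, by linarith⟩
end

section
/- Suppose the real polynomial x^4 + 4x^3 + a x^2 + b x + c factors as (x + y1)(x + y2)(x + y3)(x + y4) with y1, y2, y3, y4 > 0 (i.e., it has four negative real roots). Then 0 < a ≤ 6, 0 < b ≤ 4 and 0 < c ≤ 1. -/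
/-!
The coefficients of `∏ (X + yᵢ)` are the elementary symmetric functions `eₖ` of the `yᵢ`, which
are positive when the `yᵢ` are. The upper bounds are Maclaurin's inequality
`eₖ(s) ≤ (n.choose k) mᵏ`, where `m` is the mean of the `n` nonnegative elements of `s`. Adjoining
an element `a` to `s` moves the mean to `m + (a - m) / (n + 1)`, and Bernoulli's inequality bounds
the power of the new mean below by its tangent at `m`, which is exactly what the recursion
`eₖ₊₁(a, s) = eₖ₊₁(s) + a eₖ(s)` requires.
-/

open Polynomial

section Semiring

variable {R : Type*} [CommSemiring R]

theorem multiset_esymm_cons_succ (a : R) (s : Multiset R) (k : ℕ) :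
    (a ::ₘ s).esymm (k + 1) = s.esymm (k + 1) + a * s.esymm k := by
  simp [Multiset.esymm, Multiset.powersetCard_cons, Multiset.sum_map_mul_left]

theorem multiset_esymm_pos [PartialOrder R] [IsStrictOrderedRing R] {s : Multiset R}
    (hs : ∀ y ∈ s, 0 < y) {k : ℕ} (hk : k ≤ s.card) : 0 < s.esymm k := by
  refine Multiset.sum_induction_nonempty (0 < ·) (fun _ _ ↦ add_pos) ?_ ?_
  · simpa [← Multiset.card_pos, pos_iff_ne_zero, Nat.choose_eq_zero_iff] using hk
  · simp only [Multiset.mem_map, Multiset.mem_powersetCard]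
    rintro _ ⟨t, ⟨hts, -⟩, rfl⟩
    exact Multiset.prod_pos fun y hy ↦ hs y (Multiset.mem_of_le hts hy)

end Semiring

theorem coeff_eq_multiset_esymm_of_eval_eq_prod_add {R : Type*} [CommRing R] [IsDomain R]
    [Infinite R] {p : R[X]} {s : Multiset R} (hp : ∀ x, p.eval x = (s.map (x + ·)).prod)
    {k : ℕ} (hk : k ≤ s.card) : p.coeff k = s.esymm (s.card - k) := by
  have hprod : p = (s.map (X + C ·)).prod :=
    Polynomial.funext fun x ↦ by simp [hp, eval_multiset_prod]
  rw [hprod, s.prod_X_add_C_coeff hk]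

section Field

variable {K : Type*} [Field K] [LinearOrder K] [IsStrictOrderedRing K]

theorem choose_mul_pow_add_le_choose_mul_mean_pow {m a : K} (hm : 0 ≤ m) (ha : 0 ≤ a) (n k : ℕ) :
    n.choose (k + 1) * m ^ (k + 1) + a * (n.choose k * m ^ k) ≤
      (n + 1).choose (k + 1) * ((a + n * m) / (n + 1)) ^ (k + 1) := by
  have hn : (0 : K) < n + 1 := by positivity
  have hmean : m + (a - m) / (n + 1) = (a + n * m) / (n + 1) := by field_simp; ring
  have hbernoulli :
      m ^ (k + 1) + (k + 1) * m ^ k * ((a - m) / (n + 1)) ≤ ((a + n * m) / (n + 1)) ^ (k + 1) := by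
    have htwo_mul_nonneg : 0 ≤ 2 * m + (a - m) / (n + 1) := by
      rw [two_mul, add_assoc, hmean]
      positivity
    simpa [hmean] using pow_add_mul_le_add_pow hm htwo_mul_nonneg (k + 1)
  have hpascal : ((n + 1).choose (k + 1) : K) = n.choose k + n.choose (k + 1) :=
    mod_cast Nat.choose_succ_succ n k
  have habsorb : ((n + 1).choose (k + 1) : K) * (k + 1) / (n + 1) = n.choose k := by
    rw [div_eq_iff hn.ne', mul_comm (n.choose k : K)]
    exact mod_cast (Nat.add_one_mul_choose_eq n k).symm
  calc n.choose (k + 1) * m ^ (k + 1) + a * (n.choose k * m ^ k)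
      = (n + 1).choose (k + 1) * m ^ (k + 1) + n.choose k * m ^ k * (a - m) := by
        rw [hpascal]; ring
    _ = (n + 1).choose (k + 1) * (m ^ (k + 1) + (k + 1) * m ^ k * ((a - m) / (n + 1))) := by
        rw [← habsorb]; ring
    _ ≤ (n + 1).choose (k + 1) * ((a + n * m) / (n + 1)) ^ (k + 1) := by gcongr

theorem multiset_esymm_le_choose_mul_mean_pow {s : Multiset K} (hs : ∀ y ∈ s, 0 ≤ y) (k : ℕ) :
    s.esymm k ≤ s.card.choose k * (s.sum / s.card) ^ k := by
  induction s using Multiset.induction_on generalizing k with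
  | empty => cases k <;> simp [Multiset.esymm, Multiset.powersetCard_zero_right]
  | cons a s ih =>
    obtain ⟨ha, hs⟩ := Multiset.forall_mem_cons.mp hs
    cases k with
    | zero => simp [Multiset.esymm]
    | succ k =>
      have hmean_nonneg : 0 ≤ s.sum / s.card :=
        div_nonneg (Multiset.sum_nonneg hs) (Nat.cast_nonneg _)
      -- If `s` is empty, both sides vanish, since `0 / 0 = 0`.
      have hsum : s.card * (s.sum / s.card) = s.sum :=
        mul_div_cancel_of_imp' fun hcard ↦ by simp_all
      calc (a ::ₘ s).esymm (k + 1)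
          = s.esymm (k + 1) + a * s.esymm k := multiset_esymm_cons_succ a s k
        _ ≤ s.card.choose (k + 1) * (s.sum / s.card) ^ (k + 1) +
              a * (s.card.choose k * (s.sum / s.card) ^ k) := by
            gcongr
            exacts [ih hs (k + 1), ih hs k]
        _ ≤ (s.card + 1).choose (k + 1) *
              ((a + s.card * (s.sum / s.card)) / (s.card + 1)) ^ (k + 1) :=
            choose_mul_pow_add_le_choose_mul_mean_pow hmean_nonneg ha s.card k
        _ = (a ::ₘ s).card.choose (k + 1) * ((a ::ₘ s).sum / (a ::ₘ s).card) ^ (k + 1) := by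
            simp [hsum]

theorem coeff_mem_Ioc_of_eval_eq_prod_add {p : K[X]} {s : Multiset K} (hs : ∀ y ∈ s, 0 < y)
    (hp : ∀ x, p.eval x = (s.map (x + ·)).prod) {k : ℕ} (hk : k ≤ s.card) :
    p.coeff k ∈ Set.Ioc 0 (s.card.choose k * (s.sum / s.card) ^ (s.card - k)) := by
  rw [coeff_eq_multiset_esymm_of_eval_eq_prod_add hp hk, ← Nat.choose_symm hk]
  exact ⟨multiset_esymm_pos hs (Nat.sub_le _ _),
    multiset_esymm_le_choose_mul_mean_pow (fun y hy ↦ (hs y hy).le) _⟩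

theorem quartic_neg_roots_coeff_bounds_general (a b c y₁ y₂ y₃ y₄ : K)
    (h₁ : 0 < y₁) (h₂ : 0 < y₂) (h₃ : 0 < y₃) (h₄ : 0 < y₄)
    (hfac : ∀ x : K,
      x ^ 4 + 4 * x ^ 3 + a * x ^ 2 + b * x + c = (x + y₁) * (x + y₂) * (x + y₃) * (x + y₄)) :
    (0 < a ∧ a ≤ 6) ∧ (0 < b ∧ b ≤ 4) ∧ (0 < c ∧ c ≤ 1) := by
  let s : Multiset K := {y₁, y₂, y₃, y₄}
  let p : K[X] := X ^ 4 + C 4 * X ^ 3 + C a * X ^ 2 + C b * X + C c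
  have hs : ∀ y ∈ s, 0 < y := by simp [s, h₁, h₂, h₃, h₄]
  have hcard : s.card = 4 := rfl
  have hp (x : K) : p.eval x = (s.map (x + ·)).prod := by simp [p, s, hfac, mul_assoc]
  have hsum : s.sum = 4 := by
    have hthird := coeff_eq_multiset_esymm_of_eval_eq_prod_add hp (k := 3) (by simp [hcard])
    simpa [p, hcard, coeff_X, coeff_C, Multiset.esymm, Multiset.powersetCard_one] using hthird.symm
  have hbounds {k : ℕ} (hk : k ≤ 4) : p.coeff k ∈ Set.Ioc 0 (Nat.choose 4 k : K) := by
    simpa [hcard, hsum] using coeff_mem_Ioc_of_eval_eq_prod_add hs hp hk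
  have ha : 0 < a ∧ a ≤ 6 := by
    simpa [p, coeff_X, coeff_C, Nat.choose] using hbounds (k := 2) (by norm_num)
  have hb : 0 < b ∧ b ≤ 4 := by
    simpa [p, coeff_X, coeff_C] using hbounds (k := 1) (by norm_num)
  have hc : 0 < c ∧ c ≤ 1 := by
    simpa [p] using hbounds (k := 0) (by norm_num)
  exact ⟨ha, hb, hc⟩

end Field

/-- If `x^4 + 4x^3 + a x^2 + b x + c = (x + y1)(x + y2)(x + y3)(x + y4)` with
`y1, y2, y3, y4 > 0`, then `0 < a ≤ 6`, `0 < b ≤ 4` and `0 < c ≤ 1`. -/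
theorem quartic_neg_roots_coeff_bounds (a b c y₁ y₂ y₃ y₄ : ℝ)
    (h₁ : 0 < y₁) (h₂ : 0 < y₂) (h₃ : 0 < y₃) (h₄ : 0 < y₄)
    (hfac : ∀ x : ℝ,
      x ^ 4 + 4 * x ^ 3 + a * x ^ 2 + b * x + c = (x + y₁) * (x + y₂) * (x + y₃) * (x + y₄)) :
    (0 < a ∧ a ≤ 6) ∧ (0 < b ∧ b ≤ 4) ∧ (0 < c ∧ c ≤ 1) :=
  quartic_neg_roots_coeff_bounds_general a b c y₁ y₂ y₃ y₄ h₁ h₂ h₃ h₄ hfac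
end

section
/- Let p be a real polynomial whose derivative factors as p'(X) = C·(X − x1)·(X − x2)·…·(X − xn) with C ≠ 0 and x1 < x2 < … < xn, where n ≥ 3. Then the critical values of p alternate: for every i with 1 ≤ i ≤ n − 2, one has (p(x_{i+1}) − p(x_i))·(p(x_{i+2}) − p(x_{i+1})) < 0. In particular, the passport of a Morse polynomial is an alternating permutation. -/
open Polynomial

/-!
By the mean value theorem, the two differences of consecutive critical values are positive
multiples of `p'(ξ)` and `p'(η)` with `x i < ξ < x (i+1) < η < x (i+2)`. In
`p'(ξ) p'(η) = C² ∏ (ξ - x j) (η - x j)` the only root separating `ξ` from `η` is `x (i+1)`,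
so exactly one factor is negative and the others are positive.
-/

lemma sub_mul_sub_neg_of_hasDerivAt_mul_neg {f f' : ℝ → ℝ} {a b c : ℝ} (hab : a < b) (hbc : b < c)
    (hf : ContinuousOn f (Set.Icc a c))
    (hff' : ∀ y ∈ Set.Ioo a b ∪ Set.Ioo b c, HasDerivAt f (f' y) y)
    (hneg : ∀ ξ ∈ Set.Ioo a b, ∀ η ∈ Set.Ioo b c, f' ξ * f' η < 0) :
    (f b - f a) * (f c - f b) < 0 := by
  obtain ⟨ξ, hξ, hξ_slope⟩ := exists_hasDerivAt_eq_slope f f' hab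
    (hf.mono (Set.Icc_subset_Icc_right hbc.le)) fun y hy => hff' y (.inl hy)
  obtain ⟨η, hη, hη_slope⟩ := exists_hasDerivAt_eq_slope f f' hbc
    (hf.mono (Set.Icc_subset_Icc_left hab.le)) fun y hy => hff' y (.inr hy)
  have hba : 0 < b - a := sub_pos.2 hab
  have hcb : 0 < c - b := sub_pos.2 hbc
  calc (f b - f a) * (f c - f b)
      = (b - a) * (c - b) * (f' ξ * f' η) := by
        rw [hξ_slope, hη_slope]
        field_simp
    _ < 0 := mul_neg_of_pos_of_neg (mul_pos hba hcb) (hneg ξ hξ η hη)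

lemma prod_sub_mul_prod_sub_neg {ι R : Type*} [CommRing R] [LinearOrder R] [IsStrictOrderedRing R]
    {s : Finset ι} {x : ι → R} {k : ι} {ξ η : R} (hk : k ∈ s) (hξ : ξ < x k) (hη : x k < η)
    (hsep : ∀ j ∈ s, j ≠ k → x j < ξ ∨ η < x j) :
    (∏ j ∈ s, (ξ - x j)) * ∏ j ∈ s, (η - x j) < 0 := by
  classical
  have hξη : ξ < η := hξ.trans hη
  have hfactor_k : (ξ - x k) * (η - x k) < 0 :=
    mul_neg_of_neg_of_pos (sub_neg.2 hξ) (sub_pos.2 hη)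
  have hfactor_pos : ∀ j ∈ s.erase k, 0 < (ξ - x j) * (η - x j) := fun j hj => by
    obtain ⟨hjk, hjs⟩ := Finset.mem_erase.1 hj
    rcases hsep j hjs hjk with hlt | hgt
    · exact mul_pos (sub_pos.2 hlt) (sub_pos.2 (hlt.trans hξη))
    · exact mul_pos_of_neg_of_neg (sub_neg.2 (hξη.trans hgt)) (sub_neg.2 hgt)
  rw [← Finset.prod_mul_distrib, ← Finset.mul_prod_erase s _ hk]
  exact mul_neg_of_neg_of_pos hfactor_k (Finset.prod_pos hfactor_pos)

lemma eval_sub_mul_eval_sub_neg_of_derivative_eq_prod {ι : Type*} {s : Finset ι} {x : ι → ℝ}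
    {p : ℝ[X]} {r : ℝ} (hr : r ≠ 0) (hder : derivative p = C r * ∏ j ∈ s, (X - C (x j)))
    {k : ι} (hk : k ∈ s) {a c : ℝ} (ha : a < x k) (hc : x k < c)
    (hsep : ∀ j ∈ s, j ≠ k → x j ≤ a ∨ c ≤ x j) :
    (p.eval (x k) - p.eval a) * (p.eval c - p.eval (x k)) < 0 := by
  have heval (y : ℝ) : (derivative p).eval y = r * ∏ j ∈ s, (y - x j) := by
    simp [hder, eval_prod]
  refine sub_mul_sub_neg_of_hasDerivAt_mul_neg ha hc p.continuousOn (fun y _ => p.hasDerivAt y)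
    fun ξ hξ η hη => ?_
  have hprod : (∏ j ∈ s, (ξ - x j)) * ∏ j ∈ s, (η - x j) < 0 :=
    prod_sub_mul_prod_sub_neg hk hξ.2 hη.1 fun j hj hjk =>
      (hsep j hj hjk).imp hξ.1.trans_le' hη.2.trans_le
  rw [heval, heval, mul_mul_mul_comm]
  exact mul_neg_of_pos_of_neg (mul_self_pos.2 hr) hprod

theorem critical_values_alternate_general {p : ℝ[X]} {n : ℕ} {r : ℝ} (hr : r ≠ 0) {x : ℕ → ℝ}
    (hmono : MonotoneOn x (Set.Iio n))
    (hder : derivative p = C r * ∏ i ∈ Finset.range n, (X - C (x i)))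
    {i : ℕ} (hi : i + 2 < n) (hleft : x i < x (i + 1)) (hright : x (i + 1) < x (i + 2)) :
    (p.eval (x (i + 1)) - p.eval (x i)) * (p.eval (x (i + 2)) - p.eval (x (i + 1))) < 0 := by
  refine eval_sub_mul_eval_sub_neg_of_derivative_eq_prod hr hder
    (Finset.mem_range.2 (by lia)) hleft hright fun j hj hne => ?_
  have hjn : j < n := Finset.mem_range.1 hj
  have hin : i < n := by lia
  exact hne.lt_or_gt.imp (fun hlt => hmono hjn hin (Nat.le_of_lt_succ hlt))
    fun hgt => hmono hi hjn hgt

/-- If the derivative of a real polynomial `p` factors as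
`C·(X − x 0)·(X − x 1)·…·(X − x (n-1))` with `C ≠ 0` and `x 0 < x 1 < … < x (n-1)`, `n ≥ 3`,
then consecutive critical values alternate: for every `i` with `i + 2 < n`,
`(p(x (i+1)) − p(x i))·(p(x (i+2)) − p(x (i+1))) < 0`. -/
theorem critical_values_alternate (p : Polynomial ℝ) (n : ℕ) (hn : 3 ≤ n)
    (C : ℝ) (hC : C ≠ 0) (x : ℕ → ℝ)
    (hmono : ∀ i j : ℕ, i < j → j < n → x i < x j)
    (hder : derivative p =
      Polynomial.C C * ∏ i ∈ Finset.range n, (X - Polynomial.C (x i))) :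
    ∀ i : ℕ, i + 2 < n →
      (p.eval (x (i + 1)) - p.eval (x i)) * (p.eval (x (i + 2)) - p.eval (x (i + 1))) < 0 := by
  have hstrict : StrictMonoOn x (Set.Iio n) := fun i _ j hj hij => hmono i j hij hj
  exact fun i hi => critical_values_alternate_general hC hstrict.monotoneOn hder hi
    (hmono i (i + 1) (by lia) (by lia)) (hmono (i + 1) (i + 2) (by lia) hi)
end

section
/- Let n ≥ 2 be even and let 1 ≤ m ≤ n + 1. Then U(n+1, m) = Σ_{k=m}^{n} D(n, k); that is, the number of up-down permutations of {1,…,n+1} with first entry m equals the sum over k from m to n of the number of down-up permutations of {1,…,n} with first entry k. -/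
/-!
Deleting the first entry `p` of an up-down permutation of `Fin (n + 1)` and standardising the rest
leaves a down-up permutation `τ` of `Fin n`. All that is lost is the initial ascent, which says that
`p` is below the `τ 0`-th smallest of the other values, that is, `p ≤ τ 0`. So the up-down
permutations starting with `p` correspond to the down-up permutations starting with at least `p`.
-/

/-- `σ` (a permutation of `Fin n`, values recorded `0`-based) is down-up:
`σ 0 > σ 1 < σ 2 > σ 3 < …`. -/
def IsDownUp {n : ℕ} (σ : Equiv.Perm (Fin n)) : Prop :=
  ∀ i j : Fin n, (j : ℕ) = (i : ℕ) + 1 →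
    (if Even (i : ℕ) then σ j < σ i else σ i < σ j)

/-- `σ` (a permutation of `Fin n`, values recorded `0`-based) is up-down:
`σ 0 < σ 1 > σ 2 < σ 3 > …`. -/
def IsUpDown {n : ℕ} (σ : Equiv.Perm (Fin n)) : Prop :=
  ∀ i j : Fin n, (j : ℕ) = (i : ℕ) + 1 →
    (if Even (i : ℕ) then σ i < σ j else σ j < σ i)

instance {n : ℕ} : DecidablePred (IsDownUp (n := n)) := fun _ => by
  unfold IsDownUp; infer_instance

instance {n : ℕ} : DecidablePred (IsUpDown (n := n)) := fun _ => by
  unfold IsUpDown; infer_instance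

/-- `D n m`: the number of down-up permutations `(a₁, …, aₙ)` of `{1, …, n}`
with first entry `a₁ = m`. -/
def downUpCount (n m : ℕ) : ℕ :=
  (Finset.univ.filter (fun σ : Equiv.Perm (Fin n) =>
    IsDownUp σ ∧ ∀ i : Fin n, (i : ℕ) = 0 → (σ i : ℕ) + 1 = m)).card

/-- `U n m`: the number of up-down permutations `(a₁, …, aₙ)` of `{1, …, n}`
with first entry `a₁ = m`. -/
def upDownCount (n m : ℕ) : ℕ :=
  (Finset.univ.filter (fun σ : Equiv.Perm (Fin n) =>
    IsUpDown σ ∧ ∀ i : Fin n, (i : ℕ) = 0 → (σ i : ℕ) + 1 = m)).card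

open Equiv Finset

/-- The permutation of `Fin (n + 1)` whose first entry is `p` and whose remaining entries are the
values other than `p`, in the relative order given by `τ`. The rotation `p.cycleRange.symm` puts `p`
in front of the other values without disturbing their order. -/
def prependPerm {n : ℕ} (p : Fin (n + 1)) (τ : Perm (Fin n)) : Perm (Fin (n + 1)) :=
  p.cycleRange.symm * Perm.decomposeFin.symm (0, τ)

section prependPerm

variable {n : ℕ} (p : Fin (n + 1)) (τ : Perm (Fin n))

@[simp]
lemma prependPerm_zero : prependPerm p τ 0 = p := by
  simp [prependPerm]

@[simp]
lemma prependPerm_succ (i : Fin n) : prependPerm p τ i.succ = p.succAbove (τ i) := by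
  simp [prependPerm]

lemma prependPerm_injective : Function.Injective (prependPerm p) := fun τ τ' h =>
  Equiv.ext fun i => Fin.succAbove_right_injective (p := p) <| by
    simpa only [prependPerm_succ] using Equiv.congr_fun h i.succ

lemma bijective_uncurry_prependPerm :
    Function.Bijective fun x : Fin (n + 1) × Perm (Fin n) => prependPerm x.1 x.2 := by
  refine (Fintype.bijective_iff_injective_and_card _).mpr ⟨?_, ?_⟩
  · rintro ⟨p, τ⟩ ⟨p', τ'⟩ h
    obtain rfl : p = p' := by simpa only [prependPerm_zero] using Equiv.congr_fun h 0
    exact Prod.ext rfl (prependPerm_injective p h)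
  · simp [Fintype.card_perm, Nat.factorial_succ]

lemma exists_prependPerm_eq (σ : Perm (Fin (n + 1))) : ∃ τ, prependPerm (σ 0) τ = σ := by
  obtain ⟨⟨p, τ⟩, rfl⟩ := bijective_uncurry_prependPerm.surjective σ
  exact ⟨τ, by rw [prependPerm_zero]⟩

end prependPerm

lemma isUpDown_iff_succ {n : ℕ} [NeZero n] (σ : Perm (Fin (n + 1))) :
    IsUpDown σ ↔ σ 0 < σ (Fin.succ 0) ∧ ∀ i j : Fin n, (j : ℕ) = i + 1 →
      if Even (i : ℕ) then σ j.succ < σ i.succ else σ i.succ < σ j.succ := by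
  simp [IsUpDown, Fin.forall_fin_succ, Nat.even_add_one, -Nat.not_even_iff_odd]

lemma isUpDown_prependPerm {n : ℕ} [NeZero n] (p : Fin (n + 1)) (τ : Perm (Fin n)) :
    IsUpDown (prependPerm p τ) ↔ IsDownUp τ ∧ (p : ℕ) ≤ τ 0 := by
  simp only [isUpDown_iff_succ, prependPerm_zero, prependPerm_succ,
    Fin.lt_succAbove_iff_le_castSucc, Fin.succAbove_lt_succAbove_iff, Fin.le_def,
    Fin.val_castSucc, and_comm, IsDownUp]

section count

variable {n : ℕ} [NeZero n]

lemma upDownCount_eq_card (m : ℕ) :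
    upDownCount n m = #{σ : Perm (Fin n) | IsUpDown σ ∧ (σ 0 : ℕ) + 1 = m} := by
  simp only [upDownCount, Fin.val_eq_zero_iff, forall_eq]

lemma downUpCount_eq_card (m : ℕ) :
    downUpCount n m = #{σ : Perm (Fin n) | IsDownUp σ ∧ (σ 0 : ℕ) + 1 = m} := by
  simp only [downUpCount, Fin.val_eq_zero_iff, forall_eq]

lemma upDownCount_eq_zero_of_lt {m : ℕ} (h : n < m) : upDownCount n m = 0 := by
  rw [upDownCount_eq_card, card_filter_eq_zero_iff]
  rintro σ - ⟨-, hσ⟩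
  omega

lemma sum_Icc_downUpCount (m : ℕ) :
    ∑ k ∈ Icc m n, downUpCount n k =
      #{τ : Perm (Fin n) | IsDownUp τ ∧ m ≤ (τ 0 : ℕ) + 1} := by
  have le_n (τ : Perm (Fin n)) : (τ 0 : ℕ) + 1 ≤ n := (τ 0).isLt
  simp only [downUpCount_eq_card, ← filter_filter, sum_card_fiberwise_eq_card_filter, mem_Icc,
    le_n, and_true]

lemma upDownCount_succ_eq_card (p : Fin (n + 1)) :
    upDownCount (n + 1) (p + 1) = #{τ : Perm (Fin n) | IsDownUp τ ∧ (p : ℕ) ≤ τ 0} := by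
  rw [upDownCount_eq_card, ← card_image_of_injective _ (prependPerm_injective p)]
  congr 1
  ext σ
  simp only [mem_filter_univ, mem_image, ← isUpDown_prependPerm, add_left_inj, Fin.val_inj]
  constructor
  · rintro ⟨hσ, rfl⟩
    obtain ⟨τ, hτ⟩ := exists_prependPerm_eq σ
    exact ⟨τ, hτ.symm ▸ hσ, hτ⟩
  · rintro ⟨τ, hτ, rfl⟩
    exact ⟨hτ, prependPerm_zero p τ⟩

end count

theorem upDown_succ_eq_sum_downUp_general (n m : ℕ) [NeZero n] (hm : 1 ≤ m) :
    upDownCount (n + 1) m = ∑ k ∈ Icc m n, downUpCount n k := by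
  obtain hmn | hmn := lt_or_ge (n + 1) m
  · rw [upDownCount_eq_zero_of_lt hmn, Icc_eq_empty_of_lt (by omega), sum_empty]
  · obtain ⟨p, rfl⟩ : ∃ p : Fin (n + 1), (p : ℕ) + 1 = m :=
      ⟨⟨m - 1, by omega⟩, Nat.sub_add_cancel hm⟩
    simp only [upDownCount_succ_eq_card, sum_Icc_downUpCount, add_le_add_iff_right]

/-- For even `n ≥ 2` and `1 ≤ m ≤ n + 1`:
`U(n+1, m) = Σ_{k=m}^{n} D(n, k)`. -/
theorem upDown_succ_eq_sum_downUp (n m : ℕ) (hn : Even n) (hn2 : 2 ≤ n)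
    (hm1 : 1 ≤ m) (hm2 : m ≤ n + 1) :
    upDownCount (n + 1) m = ∑ k ∈ Finset.Icc m n, downUpCount n k := by
  have : NeZero n := ⟨by omega⟩
  exact upDown_succ_eq_sum_downUp_general n m hm1
end

section
/- Let n ≥ 1 be odd and let 1 ≤ m ≤ n + 1. Then D(n+1, m) = Σ_{k=1}^{m−1} U(n, k); that is, the number of down-up permutations of {1,…,n+1} with first entry m equals the sum over k from 1 to m − 1 of the number of up-down permutations of {1,…,n} with first entry k. -/
/-- The permutation of `Fin (n + 1)` with first entry `p` whose remaining entries are in the same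
relative order as those of `τ`: prepending `p` inverts deletion of the first entry followed by
standardization. It is the permutation fixing `0` and sending `i + 1` to `τ i + 1`, followed by
the cycle `0 ↦ p`, `i + 1 ↦ i` for `i < p`. -/
def prependEntry {n : ℕ} (p : Fin (n + 1)) (τ : Equiv.Perm (Fin n)) :
    Equiv.Perm (Fin (n + 1)) :=
  (Equiv.Perm.decomposeFin.symm (0, τ)).trans p.cycleRange.symm

section

open Finset Equiv

variable {n : ℕ}

@[simp]
theorem prependEntry_zero (p : Fin (n + 1)) (τ : Perm (Fin n)) : prependEntry p τ 0 = p := by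
  simp [prependEntry]

@[simp]
theorem prependEntry_succ (p : Fin (n + 1)) (τ : Perm (Fin n)) (i : Fin n) :
    prependEntry p τ i.succ = p.succAbove (τ i) := by
  simp [prependEntry]

theorem prependEntry_injective (p : Fin (n + 1)) : Function.Injective (prependEntry p) := by
  intro τ τ' h
  ext1 i
  have h_succ : prependEntry p τ i.succ = prependEntry p τ' i.succ := by rw [h]
  simpa only [prependEntry_succ, Fin.succAbove_right_inj] using h_succ

theorem exists_prependEntry_eq_iff {p : Fin (n + 1)} {σ : Perm (Fin (n + 1))} :
    (∃ τ, prependEntry p τ = σ) ↔ σ 0 = p := by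
  constructor
  · rintro ⟨τ, rfl⟩
    exact prependEntry_zero p τ
  · rintro rfl
    obtain ⟨⟨q, τ⟩, hτ⟩ := Perm.decomposeFin.symm.surjective (σ.trans (σ 0).cycleRange)
    obtain rfl : q = 0 := by simpa using DFunLike.congr_fun hτ 0
    refine ⟨τ, ?_⟩
    rw [prependEntry, hτ, Equiv.trans_assoc, Equiv.self_trans_symm, Equiv.trans_refl]

theorem isDownUp_iff_forall_succ [NeZero n] (σ : Perm (Fin (n + 1))) :
    IsDownUp σ ↔ σ (Fin.succ 0) < σ 0 ∧ ∀ i j : Fin n, (j : ℕ) = i + 1 →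
      if Even (i : ℕ) then σ i.succ < σ j.succ else σ j.succ < σ i.succ := by
  simp [IsDownUp, Fin.forall_fin_succ, Nat.even_add_one, -Nat.not_even_iff_odd, ite_not]

theorem isDownUp_prependEntry_iff [NeZero n] (p : Fin (n + 1)) (τ : Perm (Fin n)) :
    IsDownUp (prependEntry p τ) ↔ IsUpDown τ ∧ (τ 0 : ℕ) < p := by
  have h_descent : p.succAbove (τ 0) < p ↔ (τ 0 : ℕ) < p :=
    Fin.succAbove_lt_iff_castSucc_lt p (τ 0)
  simp only [isDownUp_iff_forall_succ, prependEntry_zero, prependEntry_succ, h_descent,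
    Fin.succAbove_lt_succAbove_iff, IsUpDown, and_comm]

theorem downUpCount_succ [NeZero n] (p : Fin (n + 1)) :
    downUpCount (n + 1) (p + 1) = #{τ : Perm (Fin n) | IsUpDown τ ∧ (τ 0 : ℕ) < p} := by
  have h_first (σ : Perm (Fin (n + 1))) :
      (∀ i : Fin (n + 1), (i : ℕ) = 0 → (σ i : ℕ) + 1 = p + 1) ↔ σ 0 = p := by
    simp [Fin.val_inj]
  rw [← card_image_of_injective _ (prependEntry_injective p), downUpCount]
  congr 1
  ext σ
  simp only [mem_filter_univ, mem_image, h_first]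
  constructor
  · rintro ⟨hσ, hσ_first⟩
    obtain ⟨τ, rfl⟩ := exists_prependEntry_eq_iff.mpr hσ_first
    exact ⟨τ, (isDownUp_prependEntry_iff p τ).mp hσ, rfl⟩
  · rintro ⟨τ, hτ, rfl⟩
    exact ⟨(isDownUp_prependEntry_iff p τ).mpr hτ, prependEntry_zero p τ⟩

theorem sum_upDownCount [NeZero n] (m : ℕ) :
    ∑ k ∈ Icc 1 m, upDownCount n k = #{τ : Perm (Fin n) | IsUpDown τ ∧ (τ 0 : ℕ) < m} := by
  have h_maps : ∀ τ ∈ ({τ | IsUpDown τ ∧ (τ 0 : ℕ) < m} : Finset (Perm (Fin n))),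
      (τ 0 : ℕ) + 1 ∈ Icc 1 m := by
    intro τ hτ
    rw [mem_filter_univ] at hτ
    exact mem_Icc.mpr ⟨by omega, hτ.2⟩
  rw [card_eq_sum_card_fiberwise h_maps]
  refine sum_congr rfl fun k hk => ?_
  have hkm : k ≤ m := (mem_Icc.mp hk).2
  rw [upDownCount, filter_filter]
  congr 1
  refine filter_congr fun τ _ => ?_
  have h_first : (∀ i : Fin n, (i : ℕ) = 0 → (τ i : ℕ) + 1 = k) ↔ (τ 0 : ℕ) + 1 = k := by simp
  rw [h_first, and_assoc, and_congr_right_iff]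
  omega

end

theorem downUp_succ_eq_sum_upDown_general (n m : ℕ) (hn1 : 1 ≤ n)
    (hm1 : 1 ≤ m) (hm2 : m ≤ n + 1) :
    downUpCount (n + 1) m = ∑ k ∈ Finset.Icc 1 (m - 1), upDownCount n k := by
  have : NeZero n := ⟨by omega⟩
  obtain ⟨p, rfl⟩ : ∃ p, m = p + 1 := ⟨m - 1, by omega⟩
  rw [Nat.add_sub_cancel, sum_upDownCount, ← downUpCount_succ ⟨p, hm2⟩]

/-- For odd `n ≥ 1` and `1 ≤ m ≤ n + 1`:
`D(n+1, m) = Σ_{k=1}^{m−1} U(n, k)`. -/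
theorem downUp_succ_eq_sum_upDown (n m : ℕ) (hn : Odd n) (hn1 : 1 ≤ n)
    (hm1 : 1 ≤ m) (hm2 : m ≤ n + 1) :
    downUpCount (n + 1) m = ∑ k ∈ Finset.Icc 1 (m - 1), upDownCount n k :=
  downUp_succ_eq_sum_upDown_general n m hn1 hm1 hm2
end

section
/- Let b, c be real numbers, let q(x) = x^3 + 3x^2 + bx + c and let p(x) = x^5 + (15/4)x^4 + (5b/3)x^3 + (5c/2)x^2 (so that p'(x) = 5·x·q(x)). If x1 and x2 are distinct real numbers with q(x1) = 0, q(x2) = 0 and p(x1) = p(x2), then g(b, c) = 0, where g(b, c) = 128b^3 − 1998b^2 − 216c^2 + 1512bc + 3645b − 729c. In other words, g(b, c) ≠ 0 guarantees that the values of p at the roots of q are pairwise different. -/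
/-!
Let `x`, `y`, `z` be the roots of the monic cubic `q`. Since `p' = 5 t q` vanishes at both `x` and
`y`, the difference `p y - p x` is divisible by `(x - y) ^ 3`, and the cofactor is, up to a
constant, a quadratic form `F x y z`. The product `F x y z * F y z x * F z x y` is symmetric in the
roots, hence a polynomial in the coefficients of `q`; this polynomial is `-g`. If `p` takes equal
values at two distinct roots, then one of the three factors vanishes, and so does `g`.
-/

section CommRing

variable {R : Type*} [CommRing R]

/-- The cofactor of `(x - y) ^ 3` in `12 * (p y - p x)`, where `p` is a primitive of
`5 * t * (t - x) * (t - y) * (t - z)`. The factor `12` clears the denominators of `p`. -/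
def criticalValueCofactor (x y z : R) : R :=
  3 * x ^ 2 + 4 * x * y + 3 * y ^ 2 - 5 * z * (x + y)

lemma quintic_sub_quintic_eq_pow_mul_criticalValueCofactor {a b c x y z : R} (ha : a = -(x + y + z))
    (hb : b = x * y + y * z + z * x) (hc : c = -(x * y * z)) :
    (12 * y ^ 5 + 15 * a * y ^ 4 + 20 * b * y ^ 3 + 30 * c * y ^ 2) -
        (12 * x ^ 5 + 15 * a * x ^ 4 + 20 * b * x ^ 3 + 30 * c * x ^ 2) =
      (x - y) ^ 3 * criticalValueCofactor x y z := by
  subst ha hb hc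
  unfold criticalValueCofactor
  ring

/-- The left-hand side is `g` made homogeneous of weight `6`, where `a`, `b`, `c` have weights `1`,
`2`, `3`; the original `g` is the case `a = 3`. -/
lemma homogenized_g_eq_neg_prod_criticalValueCofactor {a b c x y z : R} (ha : a = -(x + y + z))
    (hb : b = x * y + y * z + z * x) (hc : c = -(x * y * z)) :
    128 * b ^ 3 - 222 * a ^ 2 * b ^ 2 - 216 * c ^ 2 + 504 * a * b * c + 45 * a ^ 4 * b -
        27 * a ^ 3 * c =
      -(criticalValueCofactor x y z * criticalValueCofactor y z x *
        criticalValueCofactor z x y) := by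
  subst ha hb hc
  unfold criticalValueCofactor
  ring

variable [NoZeroDivisors R]

lemma exists_third_root_of_cubic_eq_zero {a b c x y : R} (hne : x ≠ y)
    (hx : x ^ 3 + a * x ^ 2 + b * x + c = 0) (hy : y ^ 3 + a * y ^ 2 + b * y + c = 0) :
    ∃ z, a = -(x + y + z) ∧ b = x * y + y * z + z * x ∧ c = -(x * y * z) := by
  have hb : x ^ 2 + x * y + y ^ 2 + a * (x + y) + b = 0 := by
    refine (mul_eq_zero.mp ?_).resolve_left (sub_ne_zero.mpr hne)
    linear_combination hx - hy
  refine ⟨-a - x - y, by ring, ?_, ?_⟩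
  · linear_combination hb
  · linear_combination hx - x * hb

theorem deg5_equal_critical_values_imp_g_zero_general {a b c x₁ x₂ : R} (hne : x₁ ≠ x₂)
    (hq₁ : x₁ ^ 3 + a * x₁ ^ 2 + b * x₁ + c = 0)
    (hq₂ : x₂ ^ 3 + a * x₂ ^ 2 + b * x₂ + c = 0)
    (hp : 12 * x₁ ^ 5 + 15 * a * x₁ ^ 4 + 20 * b * x₁ ^ 3 + 30 * c * x₁ ^ 2 =
      12 * x₂ ^ 5 + 15 * a * x₂ ^ 4 + 20 * b * x₂ ^ 3 + 30 * c * x₂ ^ 2) :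
    128 * b ^ 3 - 222 * a ^ 2 * b ^ 2 - 216 * c ^ 2 + 504 * a * b * c + 45 * a ^ 4 * b -
      27 * a ^ 3 * c = 0 := by
  obtain ⟨z, ha, hb, hc⟩ := exists_third_root_of_cubic_eq_zero hne hq₁ hq₂
  have hmul : (x₁ - x₂) ^ 3 * criticalValueCofactor x₁ x₂ z = 0 := by
    rw [← quintic_sub_quintic_eq_pow_mul_criticalValueCofactor ha hb hc, hp, sub_self]
  have hcofactor : criticalValueCofactor x₁ x₂ z = 0 :=
    (mul_eq_zero.mp hmul).resolve_left (pow_ne_zero 3 (sub_ne_zero.mpr hne))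
  rw [homogenized_g_eq_neg_prod_criticalValueCofactor ha hb hc, hcofactor, zero_mul, zero_mul,
    neg_zero]

end CommRing

/-- Let `q(x) = x³ + 3x² + bx + c` and `p(x) = x⁵ + (15/4)x⁴ + (5b/3)x³ + (5c/2)x²`
(so `p' = 5·x·q`). If two distinct real roots `x₁ ≠ x₂` of `q` satisfy `p(x₁) = p(x₂)`,
then `g(b,c) = 128b³ − 1998b² − 216c² + 1512bc + 3645b − 729c = 0`: the nonvanishing of
`g` guarantees that the values of `p` at the roots of `q` are pairwise different. -/
theorem deg5_equal_critical_values_imp_g_zero (b c x₁ x₂ : ℝ) (hne : x₁ ≠ x₂)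
    (hq₁ : x₁ ^ 3 + 3 * x₁ ^ 2 + b * x₁ + c = 0)
    (hq₂ : x₂ ^ 3 + 3 * x₂ ^ 2 + b * x₂ + c = 0)
    (hp : x₁ ^ 5 + 15 / 4 * x₁ ^ 4 + 5 * b / 3 * x₁ ^ 3 + 5 * c / 2 * x₁ ^ 2 =
      x₂ ^ 5 + 15 / 4 * x₂ ^ 4 + 5 * b / 3 * x₂ ^ 3 + 5 * c / 2 * x₂ ^ 2) :
    128 * b ^ 3 - 1998 * b ^ 2 - 216 * c ^ 2 + 1512 * b * c + 3645 * b - 729 * c = 0 := by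
  linear_combination deg5_equal_critical_values_imp_g_zero_general (a := 3) hne hq₁ hq₂
    (by linear_combination 12 * hp)
end

section
/- Let b, c be real numbers, let q(x) = x^3 + 3x^2 + bx + c and let p(x) = x^5 + (15/4)x^4 + (5b/3)x^3 + (5c/2)x^2 (so that p'(x) = 5·x·q(x)). If x0 is a nonzero real number with q(x0) = 0 and p(x0) = 0, then h(b, c) = 0, where h(b, c) = 640b^3 − 1350b^2 + 5832c^2 − 9720bc + 18225c. In other words, h(b, c) ≠ 0 guarantees that the values of p at the roots of q are nonzero (i.e., different from the critical value p(0) = 0). -/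
/-!
For `q = x³ + ax² + bx + c` and `p' = 5xq`, the combination `30x²q - 12p` equals
`x³ (18x² + 15ax + 10b)`, so a nonzero common zero of `p` and `q` is a zero of `18x² + 15ax + 10b`.
Subtracting `x` times this quadratic from `18q` leaves `3ax² + 8bx + 18c`, which has the same zero.
The resultant of the two quadratics therefore vanishes; for `a = 3` it is `18 * h(b, c)`.
-/

theorem quadratic_resultant_eq_zero_of_common_root {R : Type*} [CommRing R] {a b c a' b' c' x : R}
    (h : a * x ^ 2 + b * x + c = 0) (h' : a' * x ^ 2 + b' * x + c' = 0) :
    (a * c' - a' * c) ^ 2 - (a * b' - a' * b) * (b * c' - b' * c) = 0 := by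
  have elim_sq : a * c' - a' * c = -(a * b' - a' * b) * x := by
    linear_combination a * h' - a' * h
  have elim_linear : b * c' - b' * c = (a * b' - a' * b) * x ^ 2 := by
    linear_combination b * h' - b' * h
  rw [elim_sq, elim_linear]
  ring

section Field

variable {K : Type*} [Field K] {a b c x : K}

theorem quadratic_eq_zero_of_cubic_eq_zero_of_quintic_eq_zero
    (h2 : (2 : K) ≠ 0) (h3 : (3 : K) ≠ 0) (hx : x ≠ 0)
    (hq : x ^ 3 + a * x ^ 2 + b * x + c = 0)
    (hp : x ^ 5 + 5 * a / 4 * x ^ 4 + 5 * b / 3 * x ^ 3 + 5 * c / 2 * x ^ 2 = 0) :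
    18 * x ^ 2 + 15 * a * x + 10 * b = 0 := by
  have h4 : (4 : K) ≠ 0 := by
    rw [show (4 : K) = 2 * 2 by norm_num]
    exact mul_ne_zero h2 h2
  have hp12 : 12 * x ^ 5 + 15 * a * x ^ 4 + 20 * b * x ^ 3 + 30 * c * x ^ 2 = 0 := by
    calc
      _ = 12 * (x ^ 5 + 5 * a / 4 * x ^ 4 + 5 * b / 3 * x ^ 3 + 5 * c / 2 * x ^ 2) := by
        field_simp
        ring
      _ = 0 := by rw [hp, mul_zero]
  have hmul : x ^ 3 * (18 * x ^ 2 + 15 * a * x + 10 * b) = 0 := by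
    linear_combination 30 * x ^ 2 * hq - hp12
  exact (mul_eq_zero.mp hmul).resolve_left (pow_ne_zero 3 hx)

theorem deg5_zero_critical_value_imp_h_zero_general
    (h2 : (2 : K) ≠ 0) (h3 : (3 : K) ≠ 0) (hx : x ≠ 0)
    (hq : x ^ 3 + a * x ^ 2 + b * x + c = 0)
    (hp : x ^ 5 + 5 * a / 4 * x ^ 4 + 5 * b / 3 * x ^ 3 + 5 * c / 2 * x ^ 2 = 0) :
    640 * b ^ 3 - 150 * a ^ 2 * b ^ 2 + 5832 * c ^ 2 - 3240 * a * b * c + 675 * a ^ 3 * c = 0 := by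
  have hquad : 18 * x ^ 2 + 15 * a * x + 10 * b = 0 :=
    quadratic_eq_zero_of_cubic_eq_zero_of_quintic_eq_zero h2 h3 hx hq hp
  have hquad' : 3 * a * x ^ 2 + 8 * b * x + 18 * c = 0 := by
    linear_combination 18 * hq - x * hquad
  have h18 : (18 : K) ≠ 0 := by
    rw [show (18 : K) = 2 * 3 ^ 2 by norm_num]
    exact mul_ne_zero h2 (pow_ne_zero 2 h3)
  refine (mul_eq_zero.mp ?_).resolve_left h18
  linear_combination quadratic_resultant_eq_zero_of_common_root hquad hquad'

end Field

/-- Let `q(x) = x³ + 3x² + bx + c` and `p(x) = x⁵ + (15/4)x⁴ + (5b/3)x³ + (5c/2)x²`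
(so `p' = 5·x·q`). If a nonzero real root `x₀` of `q` satisfies `p(x₀) = 0`, then
`h(b,c) = 640b³ − 1350b² + 5832c² − 9720bc + 18225c = 0`: the nonvanishing of `h`
guarantees that the values of `p` at the roots of `q` are nonzero. -/
theorem deg5_zero_critical_value_imp_h_zero (b c x₀ : ℝ) (hx₀ : x₀ ≠ 0)
    (hq : x₀ ^ 3 + 3 * x₀ ^ 2 + b * x₀ + c = 0)
    (hp : x₀ ^ 5 + 15 / 4 * x₀ ^ 4 + 5 * b / 3 * x₀ ^ 3 + 5 * c / 2 * x₀ ^ 2 = 0) :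
    640 * b ^ 3 - 1350 * b ^ 2 + 5832 * c ^ 2 - 9720 * b * c + 18225 * c = 0 := by
  linear_combination deg5_zero_critical_value_imp_h_zero_general (a := 3)
    two_ne_zero three_ne_zero hx₀ hq (by linear_combination hp)
end

section
/- Let a, b, c be real numbers, let q(x) = x^4 + 4x^3 + ax^2 + bx + c and let P(x) = (1/6)x^6 + (4/5)x^5 + (a/4)x^4 + (b/3)x^3 + (c/2)x^2 (so that P'(x) = x·q(x)). If x1 and x2 are distinct real numbers with q(x1) = 0, q(x2) = 0 and P(x1) = P(x2), then s(a, b, c) = 0, where s(a,b,c) = 37500a^7b − 15625a^6b^2 − 688000a^6b − 90000a^6c − 480000a^5b^2 − 450000a^5bc + 3624960a^5b + 1651200a^5c + 600000a^4b^3 + 187500a^4b^2c + 13363200a^4b^2 + 13824000a^4bc − 5898240a^4b + 1080000a^4c^2 − 8699904a^4c − 125000a^3b^4 − 9344000a^3b^3 − 8160000a^3b^2c − 73662464a^3b^2 + 1800000a^3bc^2 − 163184640a^3bc − 28416000a^3c^2 + 14155776a^3c + 1440000a^2b^4 + 1200000a^2b^3c + 3932160a^2b^3 − 750000a^2b^2c^2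 + 126259200a^2b^2c + 116391936a^2b^2 − 24576000a^2bc^2 + 723517440a^2bc − 4320000a^2c^3 + 299630592a^2c^2 + 19046400ab^4 − 46080000ab^3c + 154140672ab^3 + 23040000ab^2c^2 − 438829056ab^2c − 2400000abc^3 − 47185920abc^2 − 1056964608abc + 70656000ac^3 − 1264582656ac^2 − 4096000b^5 + 7680000b^4c − 66322432b^4 − 4800000b^3c^2 + 96337920b^3c + 1000000b^2c^3 − 8601600b^2c^2 + 276824064b^2c − 23552000bc^3 + 421527552bc^2 − 203423744c^3 − 268435456b^3 + 1811939328c^2 + 5760000c^4. In other words, s(a, b, c) ≠ 0 guarantees that the values of P at the roots of q are pairwise different. -/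
/-!
Write `q = (x² - u₁x + v₁)(x² - u₂x + v₂)`, where `x₁` and `x₂` are the roots of the first factor.
Since `P' = x q` vanishes at `x₁` and `x₂`, the difference `P(x₁) - P(x₂)` is divisible by
`(x₁ - x₂)³`; the cofactor is, up to a constant, `pairFactor u₁ v₁ u₂ v₂`, which
therefore vanishes.

Multiplying it by its image under the exchange of the two quadratic factors gives an expression
invariant under that exchange, namely a quadratic polynomial in `y = v₁ + v₂` with coefficients in
`ℤ[a, b, c]`. As `y` is also a root of the resolvent cubic of `q`, the resultant of the two
polynomials is zero. All of this works with any coefficient `d` of `x³` in place of `4`; for `d = 4`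
the resultant is `-s(a, b, c)`.
-/

open Polynomial

section Resultant

variable {R : Type*} [CommRing R]

theorem resultant_eq_zero_of_isRoot {f g : R[X]} {m n : ℕ} (hf : f.natDegree ≤ m)
    (hg : g.natDegree ≤ n) (hmn : m ≠ 0 ∨ n ≠ 0) {y : R} (hfy : f.IsRoot y) (hgy : g.IsRoot y) :
    f.resultant g m n = 0 := by
  obtain ⟨p, q, -, -, hpq⟩ := exists_mul_add_mul_eq_C_resultant f g hf hg hmn
  simpa [hfy.eq_zero, hgy.eq_zero] using congrArg (eval y) hpq.symm

theorem sylvester_cubic_quadratic (a b c d e f g : R) :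
    sylvester (Cubic.toPoly ⟨a, b, c, d⟩) (Cubic.toPoly ⟨0, e, f, g⟩) 3 2 =
      !![g, 0, 0, d, 0;
         f, g, 0, c, d;
         e, f, g, b, c;
         0, e, f, a, b;
         0, 0, e, 0, a] := by
  ext i j
  fin_cases i <;> fin_cases j <;> simp [sylvester, Fin.addCases]

theorem resultant_cubic_quadratic (a b c d e f g : R) :
    (Cubic.toPoly ⟨a, b, c, d⟩).resultant (Cubic.toPoly ⟨0, e, f, g⟩) 3 2 =
      a ^ 2 * g ^ 3 - a * b * f * g ^ 2 + a * c * g * (f ^ 2 - 2 * e * g)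
        - a * d * f * (f ^ 2 - 3 * e * g) + b ^ 2 * e * g ^ 2 - b * c * e * f * g
        + b * d * e * (f ^ 2 - 2 * e * g) + c ^ 2 * e ^ 2 * g - c * d * e ^ 2 * f
        + d ^ 2 * e ^ 3 := by
  rw [resultant, sylvester_cubic_quadratic]
  simp only [Matrix.det_succ_row_zero, Matrix.det_unique, Matrix.submatrix_apply, Matrix.of_apply,
    Matrix.cons_val, Fin.sum_univ_succ, Fin.succAbove, Fin.default_eq_zero, Fin.coe_ofNat_eq_mod,
    Fin.reduceSucc, Fin.reduceCastSucc, Fin.reduceLT, ↓reduceIte]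
  ring

end Resultant

section QuarticFactorization

variable {R : Type*} [CommRing R]

/-- The resolvent cubic of the quartic `x⁴ + d x³ + a x² + b x + c`, with roots `x₁x₂ + x₃x₄`,
`x₁x₃ + x₂x₄` and `x₁x₄ + x₂x₃` in terms of the roots `xᵢ` of the quartic. -/
noncomputable def resolventCubic (d a b c : R) : R[X] :=
  Cubic.toPoly ⟨1, -a, b * d - 4 * c, 4 * a * c - b ^ 2 - c * d ^ 2⟩

/-- `60 P(x)` for the antiderivative `P` of `x (x⁴ + d x³ + a x² + b x + c)` with `P(0) = 0`; the
factor `60` makes the coefficients integral. -/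
def scaledAntideriv (d a b c x : R) : R :=
  10 * x ^ 6 + 12 * d * x ^ 5 + 15 * a * x ^ 4 + 20 * b * x ^ 3 + 30 * c * x ^ 2

/-- For `q = (x² - u₁x + v₁)(x² - u₂x + v₂)` and an antiderivative `P` of `x q`, the cofactor of
`(x₂ - x₁)³` in `60 (P(x₁) - P(x₂))`, where `x₁` and `x₂` are the roots of `x² - u₁x + v₁`. -/
def pairFactor (u₁ v₁ u₂ v₂ : R) : R :=
  2 * u₁ ^ 3 - 3 * u₁ ^ 2 * u₂ - 3 * u₁ * v₁ + 5 * u₁ * v₂ + 2 * u₂ * v₁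

/-- The quadratic polynomial whose value at `v₁ + v₂` is the product of the two pair factors of a
factorization `x⁴ + d x³ + a x² + b x + c = (x² - u₁x + v₁)(x² - u₂x + v₂)`. -/
noncomputable def pairFactorProduct (d a b c : R) : R[X] :=
  Cubic.toPoly ⟨0, 50 * a - 12 * d ^ 2,
    -75 * a ^ 2 + 18 * a * d ^ 2 + 40 * b * d - 100 * c,
    25 * a ^ 3 - 6 * a ^ 2 * d ^ 2 - 30 * a * b * d + 4 * b * d ^ 3 + 100 * a * c
      - 16 * c * d ^ 2⟩

theorem scaledAntideriv_sub_scaledAntideriv (x₁ x₂ u v : R) :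
    scaledAntideriv (-(x₁ + x₂ + u)) (x₁ * x₂ + v + (x₁ + x₂) * u)
        (-((x₁ + x₂) * v + u * (x₁ * x₂))) (x₁ * x₂ * v) x₁ -
      scaledAntideriv (-(x₁ + x₂ + u)) (x₁ * x₂ + v + (x₁ + x₂) * u)
        (-((x₁ + x₂) * v + u * (x₁ * x₂))) (x₁ * x₂ * v) x₂ =
      (x₂ - x₁) ^ 3 * pairFactor (x₁ + x₂) (x₁ * x₂) u v := by
  simp only [scaledAntideriv, pairFactor]
  ring

theorem isRoot_resolventCubic (u₁ v₁ u₂ v₂ : R) :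
    (resolventCubic (-(u₁ + u₂)) (v₁ + v₂ + u₁ * u₂) (-(u₁ * v₂ + u₂ * v₁)) (v₁ * v₂)).IsRoot
      (v₁ + v₂) := by
  simp only [resolventCubic, Cubic.toPoly, IsRoot.def, eval_add, eval_mul, eval_pow, eval_C, eval_X]
  ring

theorem eval_pairFactorProduct (u₁ v₁ u₂ v₂ : R) :
    (pairFactorProduct (-(u₁ + u₂)) (v₁ + v₂ + u₁ * u₂) (-(u₁ * v₂ + u₂ * v₁)) (v₁ * v₂)).eval
      (v₁ + v₂) = pairFactor u₁ v₁ u₂ v₂ * pairFactor u₂ v₂ u₁ v₁ := by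
  simp only [pairFactorProduct, pairFactor, Cubic.toPoly, eval_add, eval_mul, eval_pow, eval_C,
    eval_X]
  ring

theorem resultant_resolventCubic_eq_zero_of_pairFactor_eq_zero {u₁ v₁ u₂ v₂ : R}
    (h : pairFactor u₁ v₁ u₂ v₂ = 0) :
    (resolventCubic (-(u₁ + u₂)) (v₁ + v₂ + u₁ * u₂) (-(u₁ * v₂ + u₂ * v₁)) (v₁ * v₂)).resultant
      (pairFactorProduct (-(u₁ + u₂)) (v₁ + v₂ + u₁ * u₂) (-(u₁ * v₂ + u₂ * v₁)) (v₁ * v₂))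
      3 2 = 0 := by
  refine resultant_eq_zero_of_isRoot ?_ ?_ (by simp) (isRoot_resolventCubic u₁ v₁ u₂ v₂) ?_
  · exact natDegree_cubic_le
  · rw [pairFactorProduct, Cubic.of_a_eq_zero']
    exact natDegree_quadratic_le
  · rw [IsRoot.def, eval_pairFactorProduct, h, zero_mul]

variable [NoZeroDivisors R]

theorem exists_quadratic_cofactor {d a b c x₁ x₂ : R} (hne : x₁ ≠ x₂)
    (hq₁ : x₁ ^ 4 + d * x₁ ^ 3 + a * x₁ ^ 2 + b * x₁ + c = 0)
    (hq₂ : x₂ ^ 4 + d * x₂ ^ 3 + a * x₂ ^ 2 + b * x₂ + c = 0) :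
    ∃ u v, d = -(x₁ + x₂ + u) ∧ a = x₁ * x₂ + v + (x₁ + x₂) * u ∧
      b = -((x₁ + x₂) * v + u * (x₁ * x₂)) ∧ c = x₁ * x₂ * v := by
  obtain ⟨u, rfl⟩ : ∃ u, d = -(x₁ + x₂ + u) := ⟨-(d + x₁ + x₂), by ring⟩
  obtain ⟨v, rfl⟩ : ∃ v, a = x₁ * x₂ + v + (x₁ + x₂) * u :=
    ⟨a - x₁ * x₂ - (x₁ + x₂) * u, by ring⟩
  have hb : b = -((x₁ + x₂) * v + u * (x₁ * x₂)) := by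
    apply mul_left_cancel₀ (sub_ne_zero.2 hne)
    linear_combination hq₁ - hq₂
  subst hb
  exact ⟨u, v, rfl, rfl, rfl, by linear_combination hq₁⟩

end QuarticFactorization

theorem deg6_equal_critical_values_imp_s_zero_general {R : Type*} [CommRing R] [NoZeroDivisors R]
    {d a b c x₁ x₂ : R} (hne : x₁ ≠ x₂)
    (hq₁ : x₁ ^ 4 + d * x₁ ^ 3 + a * x₁ ^ 2 + b * x₁ + c = 0)
    (hq₂ : x₂ ^ 4 + d * x₂ ^ 3 + a * x₂ ^ 2 + b * x₂ + c = 0)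
    (hP : scaledAntideriv d a b c x₁ = scaledAntideriv d a b c x₂) :
    (resolventCubic d a b c).resultant (pairFactorProduct d a b c) 3 2 = 0 := by
  obtain ⟨u, v, rfl, rfl, rfl, rfl⟩ := exists_quadratic_cofactor hne hq₁ hq₂
  have hcube : (x₂ - x₁) ^ 3 * pairFactor (x₁ + x₂) (x₁ * x₂) u v = 0 := by
    rw [← scaledAntideriv_sub_scaledAntideriv, hP, sub_self]
  have hpair : pairFactor (x₁ + x₂) (x₁ * x₂) u v = 0 :=
    (mul_eq_zero.1 hcube).resolve_left (pow_ne_zero 3 (sub_ne_zero.2 hne.symm))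
  exact resultant_resolventCubic_eq_zero_of_pairFactor_eq_zero hpair

/-- Let `q(x) = x⁴ + 4x³ + ax² + bx + c` and
`P(x) = (1/6)x⁶ + (4/5)x⁵ + (a/4)x⁴ + (b/3)x³ + (c/2)x²` (so `P' = x·q`).
If two distinct real roots `x₁ ≠ x₂` of `q` satisfy `P(x₁) = P(x₂)`, then `s(a,b,c) = 0`:
the nonvanishing of `s` guarantees that the values of `P` at the roots of `q`
are pairwise different. -/
theorem deg6_equal_critical_values_imp_s_zero (a b c x₁ x₂ : ℝ) (hne : x₁ ≠ x₂)
    (hq₁ : x₁ ^ 4 + 4 * x₁ ^ 3 + a * x₁ ^ 2 + b * x₁ + c = 0)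
    (hq₂ : x₂ ^ 4 + 4 * x₂ ^ 3 + a * x₂ ^ 2 + b * x₂ + c = 0)
    (hP : 1 / 6 * x₁ ^ 6 + 4 / 5 * x₁ ^ 5 + a / 4 * x₁ ^ 4 + b / 3 * x₁ ^ 3 + c / 2 * x₁ ^ 2 =
      1 / 6 * x₂ ^ 6 + 4 / 5 * x₂ ^ 5 + a / 4 * x₂ ^ 4 + b / 3 * x₂ ^ 3 + c / 2 * x₂ ^ 2) :
    37500 * a ^ 7 * b - 15625 * a ^ 6 * b ^ 2 - 688000 * a ^ 6 * b - 90000 * a ^ 6 * c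
      - 480000 * a ^ 5 * b ^ 2 - 450000 * a ^ 5 * b * c + 3624960 * a ^ 5 * b
      + 1651200 * a ^ 5 * c + 600000 * a ^ 4 * b ^ 3 + 187500 * a ^ 4 * b ^ 2 * c
      + 13363200 * a ^ 4 * b ^ 2 + 13824000 * a ^ 4 * b * c - 5898240 * a ^ 4 * b
      + 1080000 * a ^ 4 * c ^ 2 - 8699904 * a ^ 4 * c - 125000 * a ^ 3 * b ^ 4
      - 9344000 * a ^ 3 * b ^ 3 - 8160000 * a ^ 3 * b ^ 2 * c - 73662464 * a ^ 3 * b ^ 2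
      + 1800000 * a ^ 3 * b * c ^ 2 - 163184640 * a ^ 3 * b * c - 28416000 * a ^ 3 * c ^ 2
      + 14155776 * a ^ 3 * c + 1440000 * a ^ 2 * b ^ 4 + 1200000 * a ^ 2 * b ^ 3 * c
      + 3932160 * a ^ 2 * b ^ 3 - 750000 * a ^ 2 * b ^ 2 * c ^ 2
      + 126259200 * a ^ 2 * b ^ 2 * c + 116391936 * a ^ 2 * b ^ 2
      - 24576000 * a ^ 2 * b * c ^ 2 + 723517440 * a ^ 2 * b * c - 4320000 * a ^ 2 * c ^ 3
      + 299630592 * a ^ 2 * c ^ 2 + 19046400 * a * b ^ 4 - 46080000 * a * b ^ 3 * c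
      + 154140672 * a * b ^ 3 + 23040000 * a * b ^ 2 * c ^ 2 - 438829056 * a * b ^ 2 * c
      - 2400000 * a * b * c ^ 3 - 47185920 * a * b * c ^ 2 - 1056964608 * a * b * c
      + 70656000 * a * c ^ 3 - 1264582656 * a * c ^ 2 - 4096000 * b ^ 5
      + 7680000 * b ^ 4 * c - 66322432 * b ^ 4 - 4800000 * b ^ 3 * c ^ 2
      + 96337920 * b ^ 3 * c + 1000000 * b ^ 2 * c ^ 3 - 8601600 * b ^ 2 * c ^ 2
      + 276824064 * b ^ 2 * c - 23552000 * b * c ^ 3 + 421527552 * b * c ^ 2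
      - 203423744 * c ^ 3 - 268435456 * b ^ 3 + 1811939328 * c ^ 2 + 5760000 * c ^ 4
      = 0 := by
  have hres := deg6_equal_critical_values_imp_s_zero_general hne hq₁ hq₂
    (by simp only [scaledAntideriv]; linear_combination 60 * hP)
  rw [resolventCubic, pairFactorProduct, resultant_cubic_quadratic] at hres
  linear_combination -hres
end
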